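/- For any pair (X^a u, Y^b v) ∈ Deriv(𝒫_𝒞), the variance relation a · ⟨u⟩ = b · ⟨v⟩ holds in the sign monoid {⊕,⊖}. -/

import Mathlib

/-- The two-element sign monoid `{⊕, ⊖}` of variances. -/
inductive Sign : Type where
  | pos
  | neg
deriving DecidableEq, Repr

/-- Multiplication in the sign monoid (`⊕` is the identity, `⊖ · ⊖ = ⊕`). -/
def Sign.mul : Sign → Sign → Sign
  | .pos, s => s
  | .neg, .pos => .neg
  | .neg, .neg => .pos

/-- Variance of a word in `Σ*`: `⟨ε⟩ = ⊕`, `⟨xw⟩ = ⟨x⟩·⟨w⟩`. -/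
def wordSign {L : Type} (sgn : L → Sign) : List L → Sign
  | [] => .pos
  | x :: w => (sgn x).mul (wordSign sgn w)

/-- A derived type variable `α.w` with base type variable `α ∈ 𝒱` and word `w ∈ Σ*`. -/
structure DTV (V L : Type) : Type where
  base : V
  word : List L

/-- Appending a single field label to a derived type variable: `α.ℓ`. -/
def DTV.app {V L : Type} (α : DTV V L) (ℓ : L) : DTV V L :=
  ⟨α.base, α.word ++ [ℓ]⟩

/-- A constraint: either `VAR X` or `X ⊑ Y` for derived type variables. -/
inductive Constraint (V L : Type) : Type where
  | var : DTV V L → Constraint V L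
  | sub : DTV V L → DTV V L → Constraint V L

/-- Entailment `𝒞 ⊢ c`: the least relation containing `𝒞` and closed under the
deduction rules T-Left, T-Right, T-InheritL, T-InheritR, T-Prefix, S-Refl,
S-Trans, S-Field⊕, S-Field⊖ and S-Pointer. -/
inductive Entails {V L : Type} (sgn : L → Sign) (load store : L)
    (C : Set (Constraint V L)) : Constraint V L → Prop where
  | ax {c} : c ∈ C → Entails sgn load store C c
  | tLeft {α β} : Entails sgn load store C (.sub α β) →
      Entails sgn load store C (.var α)
  | tRight {α β} : Entails sgn load store C (.sub α β) →
      Entails sgn load store C (.var β)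
  | tInheritL {α β : DTV V L} {ℓ} : Entails sgn load store C (.sub α β) →
      Entails sgn load store C (.var (α.app ℓ)) →
      Entails sgn load store C (.var (β.app ℓ))
  | tInheritR {α β : DTV V L} {ℓ} : Entails sgn load store C (.sub α β) →
      Entails sgn load store C (.var (β.app ℓ)) →
      Entails sgn load store C (.var (α.app ℓ))
  | tPrefix {α : DTV V L} {ℓ} : Entails sgn load store C (.var (α.app ℓ)) →
      Entails sgn load store C (.var α)
  | sRefl {α} : Entails sgn load store C (.var α) →
      Entails sgn load store C (.sub α α)
  | sTrans {α β γ} : Entails sgn load store C (.sub α β) →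
      Entails sgn load store C (.sub β γ) →
      Entails sgn load store C (.sub α γ)
  | sFieldPos {α β : DTV V L} {ℓ} : Entails sgn load store C (.sub α β) →
      Entails sgn load store C (.var (β.app ℓ)) → sgn ℓ = .pos →
      Entails sgn load store C (.sub (α.app ℓ) (β.app ℓ))
  | sFieldNeg {α β : DTV V L} {ℓ} : Entails sgn load store C (.sub α β) →
      Entails sgn load store C (.var (β.app ℓ)) → sgn ℓ = .neg →
      Entails sgn load store C (.sub (β.app ℓ) (α.app ℓ))
  | sPointer {α : DTV V L} : Entails sgn load store C (.var (α.app load)) →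
      Entails sgn load store C (.var (α.app store)) →
      Entails sgn load store C (.sub (α.app store) (α.app load))

/-- `𝒞` is closed under T-Left, T-Right and T-Prefix. -/
def ClosedTLRP {V L : Type} (C : Set (Constraint V L)) : Prop :=
  (∀ α β : DTV V L, Constraint.sub α β ∈ C →
      Constraint.var α ∈ C ∧ Constraint.var β ∈ C) ∧
  (∀ (α : DTV V L) (ℓ : L), Constraint.var (α.app ℓ) ∈ C →
      Constraint.var α ∈ C)

/-- Control states of the pushdown system `𝒫_𝒞`:
`Ṽ = ((lhs(𝒱_i) ⨿ rhs(𝒱_i) ⨿ 𝒱_u) × {⊕,⊖}) ∪ {#Start, #End}`.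
`lt x a` is `(x_L)^a`, `rt x a` is `(x_R)^a`, `un x a` is `x^a` for
uninteresting `x`. -/
inductive Ctl (V : Type) : Type where
  | start : Ctl V
  | fin : Ctl V
  | lt : V → Sign → Ctl V
  | rt : V → Sign → Ctl V
  | un : V → Sign → Ctl V

/-- Stack symbols `Σ̃ = Σ ∪ {v^⊕, v^⊖ : v ∈ 𝒱_i}`. -/
inductive StkSym (V L : Type) : Type where
  | lbl : L → StkSym V L
  | tv : V → Sign → StkSym V L

/-- A word of field labels seen as a stack word. -/
def symWord {V L : Type} (u : List L) : List (StkSym V L) :=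
  u.map StkSym.lbl

/-- `lhs(x)^a`: tagged `x_L` if `x` is interesting, plain otherwise. -/
def lhsCtl {V : Type} (I : V → Bool) (x : V) (a : Sign) : Ctl V :=
  if I x then .lt x a else .un x a

/-- `rhs(x)^a`: tagged `x_R` if `x` is interesting, plain otherwise. -/
def rhsCtl {V : Type} (I : V → Bool) (x : V) (a : Sign) : Ctl V :=
  if I x then .rt x a else .un x a

/-- A configuration of an unconstrained pushdown system: a control state
together with a stack word. -/
abbrev PDSConfig (V L : Type) : Type := Ctl V × List (StkSym V L)

/-- A transition rule `⟨X; u⟩ ↪ ⟨Y; v⟩`. -/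
abbrev PDSRule (V L : Type) : Type := PDSConfig V L × PDSConfig V L

/-- `rule⊕(p.u ⊑ q.v) = ⟨lhs(p)^{⟨u⟩}; u⟩ ↪ ⟨rhs(q)^{⟨v⟩}; v⟩`. -/
def rulePos {V L : Type} (I : V → Bool) (sgn : L → Sign)
    (c : DTV V L × DTV V L) : PDSRule V L :=
  ((lhsCtl I c.1.base (wordSign sgn c.1.word), symWord c.1.word),
   (rhsCtl I c.2.base (wordSign sgn c.2.word), symWord c.2.word))

/-- `rule⊖(p.u ⊑ q.v) = ⟨lhs(q)^{⊖·⟨v⟩}; v⟩ ↪ ⟨rhs(p)^{⊖·⟨u⟩}; u⟩`. -/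
def ruleNeg {V L : Type} (I : V → Bool) (sgn : L → Sign)
    (c : DTV V L × DTV V L) : PDSRule V L :=
  ((lhsCtl I c.2.base (Sign.neg.mul (wordSign sgn c.2.word)), symWord c.2.word),
   (rhsCtl I c.1.base (Sign.neg.mul (wordSign sgn c.1.word)), symWord c.1.word))

/-- The transition rules `Δ = Δ_𝒞 ∪ Δ_ptr ∪ Δ_start ∪ Δ_end` of the pushdown
system `𝒫_𝒞` associated to a set `𝒞` of subtype constraints between derived
type variables. -/
def Delta {V L : Type} (I : V → Bool) (sgn : L → Sign) (load store : L)
    (C : Set (DTV V L × DTV V L)) : Set (PDSRule V L) :=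
  {r | ∃ c ∈ C, r = rulePos I sgn c ∨ r = ruleNeg I sgn c} ∪
  {r | ∃ v : DTV V L,
      r = rulePos I sgn (v.app store, v.app load) ∨
      r = ruleNeg I sgn (v.app store, v.app load)} ∪
  {r | ∃ (v : V) (a : Sign), I v ∧
      r = ((.start, [StkSym.tv v a]), (.lt v a, ([] : List (StkSym V L))))} ∪
  {r | ∃ (v : V) (a : Sign), I v ∧
      r = ((.rt v a, ([] : List (StkSym V L))), (.fin, [StkSym.tv v a]))}

/-- One transition step of an unconstrained pushdown system:
`(X, w) ⟶ (Y, w')` iff there is a suffix `s` and a rule `⟨X; u⟩ ↪ ⟨Y; v⟩`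
with `w = us` and `w' = vs`. -/
def PDSStep {V L : Type} (Δ : Set (PDSRule V L))
    (c c' : PDSConfig V L) : Prop :=
  ∃ r ∈ Δ, ∃ s : List (StkSym V L),
    c = (r.1.1, r.1.2 ++ s) ∧ c' = (r.2.1, r.2.2 ++ s)

/-- The reflexive-transitive closure `⟶*` of the transition relation. -/
def PDSSteps {V L : Type} (Δ : Set (PDSRule V L)) :
    PDSConfig V L → PDSConfig V L → Prop :=
  Relation.ReflTransGen (PDSStep Δ)

/-- `Deriv(𝒫_𝒞)`, as a relation on triples `X^a u`: `X, Y` are interesting and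
`(#Start, X^a u) ⟶* (#End, Y^b v)`. -/
def Deriv {V L : Type} (I : V → Bool) (sgn : L → Sign) (load store : L)
    (C : Set (DTV V L × DTV V L)) :
    (V × Sign × List L) → (V × Sign × List L) → Prop :=
  fun p q =>
    I p.1 ∧ I q.1 ∧
      PDSSteps (Delta I sgn load store C)
        (.start, StkSym.tv p.1 p.2.1 :: symWord p.2.2)
        (.fin, StkSym.tv q.1 q.2.1 :: symWord q.2.2)

/-- `Deriv'(𝒫_𝒞) = {(X.u, Y.v) : (X^{⟨u⟩} u, Y^{⟨v⟩} v) ∈ Deriv(𝒫_𝒞)}`. -/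
def Deriv' {V L : Type} (I : V → Bool) (sgn : L → Sign) (load store : L)
    (C : Set (DTV V L × DTV V L)) :
    (V × List L) → (V × List L) → Prop :=
  fun p q =>
    Deriv I sgn load store C (p.1, wordSign sgn p.2, p.2)
      (q.1, wordSign sgn q.2, q.2)

theorem Sign.mul_assoc (a b c : Sign) : (a.mul b).mul c = a.mul (b.mul c) := by
  cases a <;> cases b <;> cases c <;> rfl

theorem Sign.mul_self (a : Sign) : a.mul a = .pos := by
  cases a <;> rfl

/-- The sign carried by a stack symbol. -/
def StkSym.sign {V L : Type} (sgn : L → Sign) : StkSym V L → Sign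
  | .lbl l => sgn l
  | .tv _ a => a

/-- The sign carried by a control state; `#Start` and `#End` carry `⊕`. -/
def Ctl.sign {V : Type} : Ctl V → Sign
  | .start => .pos
  | .fin => .pos
  | .lt _ a => a
  | .rt _ a => a
  | .un _ a => a

/-- The total sign of a configuration: the sign of its control state times the
signs of all its stack symbols. -/
def PDSConfig.sign {V L : Type} (sgn : L → Sign) (c : PDSConfig V L) : Sign :=
  c.1.sign.mul (wordSign (StkSym.sign sgn) c.2)

theorem wordSign_append {L : Type} (sgn : L → Sign) (u v : List L) :
    wordSign sgn (u ++ v) = (wordSign sgn u).mul (wordSign sgn v) := by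
  induction u with
  | nil => rfl
  | cons x u ih => simp only [List.cons_append, wordSign, ih, Sign.mul_assoc]

theorem wordSign_symWord {V L : Type} (sgn : L → Sign) (u : List L) :
    wordSign (StkSym.sign sgn) (symWord u : List (StkSym V L)) = wordSign sgn u := by
  induction u with
  | nil => rfl
  | cons x u ih => exact congrArg (Sign.mul (sgn x)) ih

theorem lhsCtl_sign {V : Type} (I : V → Bool) (x : V) (a : Sign) :
    (lhsCtl I x a).sign = a := by
  unfold lhsCtl
  split <;> rfl

theorem rhsCtl_sign {V : Type} (I : V → Bool) (x : V) (a : Sign) :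
    (rhsCtl I x a).sign = a := by
  unfold rhsCtl
  split <;> rfl

theorem rulePos_sign {V L : Type} (I : V → Bool) (sgn : L → Sign)
    (c : DTV V L × DTV V L) :
    PDSConfig.sign sgn (rulePos I sgn c).1 = PDSConfig.sign sgn (rulePos I sgn c).2 := by
  simp only [PDSConfig.sign, rulePos, lhsCtl_sign, rhsCtl_sign, wordSign_symWord,
    Sign.mul_self]

theorem ruleNeg_sign {V L : Type} (I : V → Bool) (sgn : L → Sign)
    (c : DTV V L × DTV V L) :
    PDSConfig.sign sgn (ruleNeg I sgn c).1 = PDSConfig.sign sgn (ruleNeg I sgn c).2 := by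
  simp only [PDSConfig.sign, ruleNeg, lhsCtl_sign, rhsCtl_sign, wordSign_symWord,
    Sign.mul_assoc, Sign.mul_self]

/-- Every transition rule of `𝒫_𝒞` preserves the total sign. -/
theorem Delta_sign {V L : Type} {I : V → Bool} {sgn : L → Sign} {load store : L}
    {C : Set (DTV V L × DTV V L)} {r : PDSRule V L} (hr : r ∈ Delta I sgn load store C) :
    PDSConfig.sign sgn r.1 = PDSConfig.sign sgn r.2 := by
  rcases hr with ((⟨c, -, rfl | rfl⟩ | ⟨v, rfl | rfl⟩) | ⟨v, a, -, rfl⟩) | ⟨v, a, -, rfl⟩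
  · exact rulePos_sign I sgn c
  · exact ruleNeg_sign I sgn c
  · exact rulePos_sign I sgn _
  · exact ruleNeg_sign I sgn _
  · rfl
  · cases a <;> rfl

theorem PDSConfig.sign_append {V L : Type} (sgn : L → Sign) (x : Ctl V)
    (w s : List (StkSym V L)) :
    PDSConfig.sign sgn (x, w ++ s) =
      (PDSConfig.sign sgn (x, w)).mul (wordSign (StkSym.sign sgn) s) := by
  simp only [PDSConfig.sign, wordSign_append, Sign.mul_assoc]

theorem PDSSteps.sign_eq {V L : Type} {sgn : L → Sign} {Δ : Set (PDSRule V L)}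
    (hΔ : ∀ r ∈ Δ, PDSConfig.sign sgn r.1 = PDSConfig.sign sgn r.2)
    {c d : PDSConfig V L} (h : PDSSteps Δ c d) :
    PDSConfig.sign sgn c = PDSConfig.sign sgn d := by
  induction h with
  | refl => rfl
  | tail _ hstep ih =>
    obtain ⟨r, hr, s, rfl, rfl⟩ := hstep
    rw [ih, PDSConfig.sign_append, PDSConfig.sign_append, hΔ r hr]

/-- if `(X^a u, Y^b v) ∈ Deriv(𝒫_𝒞)` then the variance relation
`a · ⟨u⟩ = b · ⟨v⟩` holds in the sign monoid. -/
theorem deriv_variance {V L : Type} (I : V → Bool) (sgn : L → Sign)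
    (load store : L) (hload : sgn load = .pos) (hstore : sgn store = .neg)
    (C : Set (DTV V L × DTV V L))
    (X Y : V) (a b : Sign) (u v : List L)
    (h : Deriv I sgn load store C (X, a, u) (Y, b, v)) :
    a.mul (wordSign sgn u) = b.mul (wordSign sgn v) := by
  have hsign := PDSSteps.sign_eq (sgn := sgn) (fun _ hr => Delta_sign hr) h.2.2
  simpa only [PDSConfig.sign, Ctl.sign, wordSign, StkSym.sign, wordSign_symWord,
    Sign.mul] using hsign
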